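/- For every positive integer k, the integral defining φ_k(x) converges absolutely for every x ≥ 0, the function φ_k is continuous and bounded on [0,∞), and φ_k(x) = O(x^{-1/4}) as x → ∞. -/

import Mathlib

open scoped Real Topology
open Complex Filter MeasureTheory Finset Asymptotics

/-- The analytic extension of `s ↦ ((s-1) * ζ(s))^k` to `s = 1` (where its value is `1`). -/
noncomputable def zetaPowAux (k : ℕ) : ℂ → ℂ :=
  Function.update (fun s : ℂ => ((s - 1) * riemannZeta s) ^ k) 1 1

/-- `lam k j` is the Taylor coefficient `λ_{j,k}`, i.e. the `j`-th derivative at `s = 1` of the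
analytic extension of `(s-1)^k ζ(s)^k`; these numbers are real, and we record their real part. -/
noncomputable def lam (k j : ℕ) : ℝ :=
  (iteratedDeriv j (zetaPowAux k) 1).re

/-- The Fourier coefficients `ℓ_{n,k}` for `n ≥ -k` (an integer index). -/
noncomputable def ell (k : ℕ) (n : ℤ) : ℝ :=
  if 1 ≤ n then
    (-1 : ℝ) ^ n.toNat *
      ∑ j ∈ Finset.Icc 1 n.toNat,
        ((n.toNat - 1).choose (j - 1) : ℝ) * lam k (j + k) / (Nat.factorial (j + k))
  else
    (-1 : ℝ) ^ k *
      ∑ j ∈ Finset.range ((k + n).toNat + 1),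
        ((k - j).choose (-n).toNat : ℝ) * (-1 : ℝ) ^ j * lam k j / (Nat.factorial j)

/-- The Lindelöf Hypothesis: `ζ(1/2 + it) = O(|t|^ε)` for every `ε > 0`. -/
def LindelofHypothesis : Prop :=
  ∀ ε : ℝ, 0 < ε → ∃ C : ℝ, ∀ t : ℝ, 1 ≤ |t| →
    ‖riemannZeta (1 / 2 + t * Complex.I)‖ ≤ C * |t| ^ ε

/-- `dk k n` is the Piltz divisor function `d_k(n)`: the number of representations of `n` as an
ordered product of `k` positive integers (the `k`-th Dirichlet-convolution power of `ζ`). -/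
noncomputable def dk (k n : ℕ) : ℕ := (ArithmeticFunction.zeta ^ k) n

/-- The coefficients `a_{j,k}` of the polynomial `P_k`. -/
noncomputable def aCoef (k j : ℕ) : ℝ :=
  (-1 : ℝ) ^ (k - 1 - j) *
    ∑ i ∈ Finset.range (k - 1 - j + 1), (-1 : ℝ) ^ i * lam k i / (Nat.factorial i)

/-- The error term `Δ_k(x) = (Σ_{1 ≤ n ≤ x} d_k(n)) - x P_k(log x)` in the Piltz divisor
problem. -/
noncomputable def Deltak (k : ℕ) (x : ℝ) : ℝ :=
  (∑ n ∈ Finset.Icc 1 ⌊x⌋₊, (dk k n : ℝ)) -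
    x * ∑ j ∈ Finset.range k, aCoef k j / (Nat.factorial j) * (Real.log x) ^ j

/-- The `n`-th Laguerre polynomial. -/
noncomputable def laguerre (n : ℕ) (u : ℝ) : ℝ :=
  ∑ j ∈ Finset.range (n + 1), (n.choose j : ℝ) * (-1 : ℝ) ^ j * u ^ j / (Nat.factorial j)

/-- The Bessel function of the first kind of order `0`. -/
noncomputable def besselJ0 (u : ℝ) : ℝ :=
  ∑' m : ℕ, (-1 : ℝ) ^ m * (u / 2) ^ (2 * m) / ((Nat.factorial m : ℝ) ^ 2)

/-- `φ_k(x) = ∫_1^∞ Δ_k(r) J₀(2 √(x log r)) r⁻² dr`. -/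
noncomputable def phik (k : ℕ) (x : ℝ) : ℝ :=
  ∫ r in Set.Ioi (1 : ℝ), Deltak k r * besselJ0 (2 * Real.sqrt (x * Real.log r)) / r ^ 2

/-- The entire function `∑ (-1)^m t^m / (m! (m+ν)!)`; its derivative is `-besselAux (ν+1)`. -/
noncomputable def besselAux (ν : ℕ) (t : ℝ) : ℝ :=
  ∑' m : ℕ, (-1 : ℝ) ^ m * t ^ m / ((m.factorial : ℝ) * ((m + ν).factorial : ℝ))

theorem summable_besselAux (ν : ℕ) (t : ℝ) :
    Summable fun m : ℕ =>
      (-1 : ℝ) ^ m * t ^ m / ((m.factorial : ℝ) * ((m + ν).factorial : ℝ)) := by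
  refine Summable.of_norm_bounded (Real.summable_pow_div_factorial |t|) fun m => ?_
  have h1 : (1 : ℝ) ≤ ((m + ν).factorial : ℝ) := by exact_mod_cast Nat.factorial_pos _
  have h0 : (0 : ℝ) < (m.factorial : ℝ) := by exact_mod_cast Nat.factorial_pos _
  simp only [norm_div, norm_mul, norm_pow, norm_neg, norm_one, one_pow, one_mul, Real.norm_eq_abs,
    Nat.abs_cast]
  gcongr
  nlinarith

theorem hasDerivAt_besselAux (ν : ℕ) (t : ℝ) :
    HasDerivAt (besselAux ν) (-besselAux (ν + 1) t) t := by
  set R : ℝ := |t| + 1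
  have hR : 0 < R := by positivity
  have hu : Summable fun m : ℕ => (m : ℝ) * R ^ (m - 1) / (m.factorial : ℝ) := by
    rw [← summable_nat_add_iff 1]
    refine (Real.summable_pow_div_factorial R).congr fun m => ?_
    have h0 : (m.factorial : ℝ) ≠ 0 := by exact_mod_cast (Nat.factorial_pos m).ne'
    have h1 : ((m : ℝ) + 1) ≠ 0 := by positivity
    simp only [Nat.factorial_succ, Nat.add_sub_cancel, Nat.cast_mul, Nat.cast_add, Nat.cast_one]
    field_simp
  have key := hasDerivAt_tsum_of_isPreconnected (𝕜 := ℝ) hu (t := Metric.ball (0 : ℝ) R)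
    (g := fun (m : ℕ) (y : ℝ) =>
      (-1 : ℝ) ^ m * y ^ m / ((m.factorial : ℝ) * ((m + ν).factorial : ℝ)))
    (g' := fun (m : ℕ) (y : ℝ) =>
      (-1 : ℝ) ^ m * (m * y ^ (m - 1)) / ((m.factorial : ℝ) * ((m + ν).factorial : ℝ)))
    Metric.isOpen_ball (convex_ball _ _).isPreconnected
    (fun m y _ => ((hasDerivAt_pow m y).const_mul _).div_const _)
    (fun m y hy => ?_) (y₀ := 0) (Metric.mem_ball_self hR) (summable_besselAux ν 0)
    (y := t) (by simp [R])
  · refine key.congr_deriv ?_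
    rw [tsum_eq_zero_add']
    · simp only [besselAux, Nat.cast_zero, zero_mul, mul_zero, zero_div, zero_add]
      rw [← tsum_neg]
      refine tsum_congr fun m => ?_
      have h0 : (m.factorial : ℝ) ≠ 0 := by exact_mod_cast (Nat.factorial_pos m).ne'
      have h1 : ((m : ℝ) + 1) ≠ 0 := by positivity
      rw [show m + 1 + ν = m + (ν + 1) by ring]
      have h2 : ((m + (ν + 1)).factorial : ℝ) ≠ 0 := by exact_mod_cast (Nat.factorial_pos _).ne'
      simp only [Nat.factorial_succ m, Nat.add_sub_cancel, Nat.cast_mul, Nat.cast_add, Nat.cast_one]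
      field_simp
      ring
    · refine ((summable_besselAux (ν + 1) t).neg).congr fun m => ?_
      have h0 : (m.factorial : ℝ) ≠ 0 := by exact_mod_cast (Nat.factorial_pos m).ne'
      have h1 : ((m : ℝ) + 1) ≠ 0 := by positivity
      rw [show m + 1 + ν = m + (ν + 1) by ring]
      have h2 : ((m + (ν + 1)).factorial : ℝ) ≠ 0 := by exact_mod_cast (Nat.factorial_pos _).ne'
      simp only [Nat.factorial_succ m, Nat.add_sub_cancel, Nat.cast_mul, Nat.cast_add, Nat.cast_one]
      field_simp
      ring
  · have h1 : (1 : ℝ) ≤ ((m + ν).factorial : ℝ) := by exact_mod_cast Nat.factorial_pos _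
    have h0 : (0 : ℝ) < (m.factorial : ℝ) := by exact_mod_cast Nat.factorial_pos _
    have hy' : |y| ≤ R := by simpa using (Metric.mem_ball.1 hy).le
    simp only [norm_div, norm_mul, norm_pow, norm_neg, norm_one, one_pow, one_mul,
      Real.norm_eq_abs, Nat.abs_cast]
    gcongr
    nlinarith

/-- Bessel's equation for `besselAux 0`. -/
theorem besselAux_ode (t : ℝ) : t * besselAux 2 t - besselAux 1 t + besselAux 0 t = 0 := by
  have h0 := (summable_besselAux 0 t).hasSum
  have h1 := (summable_besselAux 1 t).hasSum
  have h2 : HasSum (fun m : ℕ => (-1 : ℝ) ^ (m + 1) * t ^ (m + 1) /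
      (((m + 1).factorial : ℝ) * ((m + 1 + 1).factorial : ℝ)) * -((m : ℝ) + 1))
      (t * besselAux 2 t) := by
    refine ((summable_besselAux 2 t).hasSum.mul_left t).congr_fun ?_
    intro m
    have h0 : (m.factorial : ℝ) ≠ 0 := by exact_mod_cast (Nat.factorial_pos m).ne'
    have h1 : ((m : ℝ) + 1) ≠ 0 := by positivity
    have h2 : ((m + 2).factorial : ℝ) ≠ 0 := by exact_mod_cast (Nat.factorial_pos _).ne'
    simp only [Nat.factorial_succ m, Nat.cast_mul, Nat.cast_add, Nat.cast_one]
    field_simp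
    ring
  have h2' : HasSum (fun m : ℕ => (-1 : ℝ) ^ m * t ^ m /
      ((m.factorial : ℝ) * ((m + 1).factorial : ℝ)) * -(m : ℝ)) (t * besselAux 2 t) := by
    rw [← hasSum_nat_add_iff' 1]
    simpa using h2
  refine ((h2'.sub h1).add h0).unique ?_
  refine hasSum_zero.congr_fun fun m => ?_
  have h0 : (m.factorial : ℝ) ≠ 0 := by exact_mod_cast (Nat.factorial_pos m).ne'
  have h1 : ((m : ℝ) + 1) ≠ 0 := by positivity
  simp only [Nat.factorial_succ m, Nat.cast_mul, Nat.cast_add, Nat.cast_one, add_zero]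
  field_simp
  ring

theorem continuous_besselAux (ν : ℕ) : Continuous (besselAux ν) :=
  continuous_iff_continuousAt.2 fun t => (hasDerivAt_besselAux ν t).continuousAt

theorem besselJ0_two_mul_sqrt {t : ℝ} (ht : 0 ≤ t) :
    besselJ0 (2 * Real.sqrt t) = besselAux 0 t := by
  refine tsum_congr fun m => ?_
  rw [mul_div_cancel_left₀ _ (two_ne_zero), pow_mul, Real.sq_sqrt ht, add_zero, sq]

theorem besselAux_zero_zero : besselAux 0 0 = 1 := by
  rw [besselAux, tsum_eq_single 0]
  · simp
  · intro m hm
    simp [hm]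

theorem abs_besselAux_le_one {t : ℝ} (ht : 0 ≤ t) : |besselAux 0 t| ≤ 1 := by
  have hd : ∀ s : ℝ, HasDerivAt (fun s => besselAux 0 s ^ 2 + s * besselAux 1 s ^ 2)
      (-besselAux 1 s ^ 2) s := by
    intro s
    have := ((hasDerivAt_besselAux 0 s).pow 2).add
      ((hasDerivAt_id s).mul ((hasDerivAt_besselAux 1 s).pow 2))
    refine this.congr_deriv ?_
    have := besselAux_ode s
    simp only [id, zero_add, one_add_one_eq_two]
    norm_num
    linear_combination (-2 * besselAux 1 s) * this
  have hanti : Antitone (fun s => besselAux 0 s ^ 2 + s * besselAux 1 s ^ 2) := by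
    refine antitone_of_hasDerivAt_nonpos hd fun s => ?_
    exact neg_nonpos.2 (sq_nonneg (besselAux 1 s))
  have h := hanti ht
  simp only [besselAux_zero_zero] at h
  rw [← sq_le_one_iff_abs_le_one]
  nlinarith [mul_nonneg ht (sq_nonneg (besselAux 1 t))]

/-- The decay of the Bessel function, from the monotonicity of the energy of `√u J₀(u)`. -/
theorem exists_besselAux_bound :
    ∃ C : ℝ, 0 ≤ C ∧ ∀ t : ℝ, 0 < t → |besselAux 0 t| ≤ C * t ^ (-(1 / 4 : ℝ)) := by
  set E : ℝ → ℝ := fun y => y ^ 3 * besselAux 1 (y ^ 2) ^ 2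
    - y * besselAux 0 (y ^ 2) * besselAux 1 (y ^ 2) / 2 + y * besselAux 0 (y ^ 2) ^ 2
    + besselAux 0 (y ^ 2) ^ 2 / (8 * y) with hE
  have hd : ∀ y : ℝ, 0 < y → HasDerivAt E (-(besselAux 0 (y ^ 2) ^ 2 / (8 * y ^ 2))) y := by
    intro y hy
    have hsq : HasDerivAt (fun y : ℝ => y ^ 2) (2 * y) y := by simpa using hasDerivAt_pow 2 y
    have h0 : HasDerivAt (fun y => besselAux 0 (y ^ 2)) (-besselAux 1 (y ^ 2) * (2 * y)) y :=
      HasDerivAt.comp (h₂ := besselAux 0) y (hasDerivAt_besselAux 0 (y ^ 2)) hsq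
    have h1 : HasDerivAt (fun y => besselAux 1 (y ^ 2)) (-besselAux 2 (y ^ 2) * (2 * y)) y :=
      HasDerivAt.comp (h₂ := besselAux 1) y (hasDerivAt_besselAux 1 (y ^ 2)) hsq
    have hid := hasDerivAt_id' y
    have := ((((hasDerivAt_pow 3 y).mul (h1.pow 2)).sub (((hid.mul h0).mul h1).div_const 2)).add
      (hid.mul (h0.pow 2))).add ((h0.pow 2).div (hid.const_mul 8) (by positivity))
    refine this.congr_deriv ?_
    have ho := besselAux_ode (y ^ 2)
    have hb : besselAux 2 (y ^ 2) = (besselAux 1 (y ^ 2) - besselAux 0 (y ^ 2)) / y ^ 2 := by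
      field_simp
      linarith
    simp only [hb]
    push_cast
    norm_num
    field_simp
    ring
  have hanti : AntitoneOn E (Set.Ici 1) := by
    refine antitoneOn_of_hasDerivWithinAt_nonpos (convex_Ici 1)
      (fun y hy => (hd y (by simp at hy; linarith)).continuousAt.continuousWithinAt)
      (fun y hy => (hd y (by simp at hy; linarith)).hasDerivWithinAt) (fun y hy => ?_)
    simp only [neg_nonpos]
    positivity
  have hlow : ∀ y : ℝ, 1 ≤ y → y * besselAux 0 (y ^ 2) ^ 2 ≤ E 1 := by
    intro y hy
    refine le_trans ?_ (hanti (Set.self_mem_Ici) hy hy)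
    have hy0 : 0 < y := by linarith
    have : E y - y * besselAux 0 (y ^ 2) ^ 2 =
        ((y ^ 2 * besselAux 1 (y ^ 2) - besselAux 0 (y ^ 2) / 4) ^ 2
          + besselAux 0 (y ^ 2) ^ 2 / 16) / y := by
      simp only [hE]
      field_simp
      ring
    have h2 : 0 ≤ E y - y * besselAux 0 (y ^ 2) ^ 2 := by rw [this]; positivity
    linarith
  have hE1 : 0 ≤ E 1 := le_trans (by positivity) (hlow 1 le_rfl)
  refine ⟨1 + Real.sqrt (E 1), by positivity, fun t ht => ?_⟩
  rcases le_total t 1 with h1 | h1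
  · have : (1 : ℝ) ≤ t ^ (-(1 / 4 : ℝ)) := Real.one_le_rpow_of_pos_of_le_one_of_nonpos ht h1 (by norm_num)
    have h3 := Real.sqrt_nonneg (E 1)
    have := abs_besselAux_le_one ht.le
    nlinarith
  · have hq : 0 < t ^ (-(1 / 4 : ℝ)) := Real.rpow_pos_of_pos ht _
    have hq4 : (t ^ (-(1 / 4 : ℝ))) ^ 2 * Real.sqrt t = 1 := by
      rw [Real.sqrt_eq_rpow, ← Real.rpow_natCast, ← Real.rpow_mul ht.le, ← Real.rpow_add ht]
      norm_num
    have h := hlow (Real.sqrt t) (by rwa [Real.one_le_sqrt])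
    rw [Real.sq_sqrt ht.le] at h
    have hb : |besselAux 0 t| ≤ Real.sqrt (E 1) * t ^ (-(1 / 4 : ℝ)) := by
      refine abs_le_of_sq_le_sq ?_ (by positivity)
      rw [mul_pow, Real.sq_sqrt hE1]
      calc besselAux 0 t ^ 2
          = (t ^ (-(1 / 4 : ℝ))) ^ 2 * (Real.sqrt t * besselAux 0 t ^ 2) := by
            rw [← mul_assoc, hq4, one_mul]
        _ ≤ (t ^ (-(1 / 4 : ℝ))) ^ 2 * E 1 := by gcongr
        _ = _ := mul_comm _ _
    nlinarith

/-- `f x` equals a polynomial in `log x` up to a power-saving error, for `x ≥ 1`. -/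
def HasLogPoly (f : ℝ → ℝ) (Q : Polynomial ℝ) : Prop :=
  ∃ C δ : ℝ, 0 ≤ C ∧ 0 < δ ∧ ∀ x : ℝ, 1 ≤ x → |f x - Q.eval (Real.log x)| ≤ C * x ^ (-δ)

theorem HasLogPoly.add {f g : ℝ → ℝ} {P Q : Polynomial ℝ} (hf : HasLogPoly f P)
    (hg : HasLogPoly g Q) : HasLogPoly (fun x => f x + g x) (P + Q) := by
  obtain ⟨C, δ, hC, hδ, h⟩ := hf
  obtain ⟨C', δ', hC', hδ', h'⟩ := hg
  refine ⟨C + C', min δ δ', by positivity, lt_min hδ hδ', fun x hx => ?_⟩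
  have h1 : x ^ (-δ) ≤ x ^ (-min δ δ') :=
    Real.rpow_le_rpow_of_exponent_le hx (neg_le_neg (min_le_left _ _))
  have h2 : x ^ (-δ') ≤ x ^ (-min δ δ') :=
    Real.rpow_le_rpow_of_exponent_le hx (neg_le_neg (min_le_right _ _))
  calc |f x + g x - (P + Q).eval (Real.log x)|
      = |(f x - P.eval (Real.log x)) + (g x - Q.eval (Real.log x))| := by
        rw [Polynomial.eval_add]; ring_nf
    _ ≤ C * x ^ (-δ) + C' * x ^ (-δ') := (abs_add_le _ _).trans (add_le_add (h x hx) (h' x hx))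
    _ ≤ C * x ^ (-min δ δ') + C' * x ^ (-min δ δ') := by gcongr
    _ = _ := by ring

theorem HasLogPoly.const_mul {f : ℝ → ℝ} {P : Polynomial ℝ} (hf : HasLogPoly f P) (c : ℝ) :
    HasLogPoly (fun x => c * f x) (Polynomial.C c * P) := by
  obtain ⟨C, δ, hC, hδ, h⟩ := hf
  refine ⟨|c| * C, δ, by positivity, hδ, fun x hx => ?_⟩
  rw [Polynomial.eval_mul, Polynomial.eval_C, ← mul_sub, abs_mul, mul_assoc]
  exact mul_le_mul_of_nonneg_left (h x hx) (abs_nonneg c)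

theorem HasLogPoly.congr {f g : ℝ → ℝ} {P : Polynomial ℝ} (hf : HasLogPoly f P)
    (h : ∀ x, 1 ≤ x → g x = f x) : HasLogPoly g P := by
  obtain ⟨C, δ, hC, hδ, hf⟩ := hf
  exact ⟨C, δ, hC, hδ, fun x hx => by rw [h x hx]; exact hf x hx⟩

theorem hasLogPoly_zero : HasLogPoly (fun _ => 0) 0 :=
  ⟨0, 1, le_rfl, one_pos, fun x _ => by simp⟩

theorem hasLogPoly_sum {ι : Type*} (s : Finset ι) {f : ι → ℝ → ℝ} {P : ι → Polynomial ℝ}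
    (h : ∀ i ∈ s, HasLogPoly (f i) (P i)) :
    HasLogPoly (fun x => ∑ i ∈ s, f i x) (∑ i ∈ s, P i) := by
  classical
  induction s using Finset.induction_on with
  | empty => simpa using hasLogPoly_zero
  | insert a s ha ih =>
    simp only [Finset.sum_insert ha]
    exact (h a (by simp)).add (ih fun i hi => h i (by simp [hi]))

/-- Polynomials in `log x` are dominated by every positive power of `x`. -/
theorem exists_eval_log_bound (Q : Polynomial ℝ) {ε : ℝ} (hε : 0 < ε) :
    ∃ C : ℝ, 0 ≤ C ∧ ∀ x : ℝ, 1 ≤ x → |Q.eval (Real.log x)| ≤ C * x ^ ε := by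
  have hmono : ∀ j : ℕ, ∃ C : ℝ, 0 ≤ C ∧ ∀ x : ℝ, 1 ≤ x → Real.log x ^ j ≤ C * x ^ ε := by
    intro j
    refine ⟨((j + 1 : ℝ) / ε) ^ j, by positivity, fun x hx => ?_⟩
    have hη : 0 < ε / (j + 1 : ℝ) := by positivity
    have h1 : Real.log x ≤ ((j + 1 : ℝ) / ε) * x ^ (ε / (j + 1 : ℝ)) := by
      have := Real.log_le_rpow_div (by linarith : 0 ≤ x) hη
      rwa [div_div_eq_mul_div, mul_div_assoc, mul_comm] at this
    have hx0 : 0 ≤ x := by linarith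
    calc Real.log x ^ j ≤ (((j + 1 : ℝ) / ε) * x ^ (ε / (j + 1 : ℝ))) ^ j :=
          pow_le_pow_left₀ (Real.log_nonneg hx) h1 j
      _ = ((j + 1 : ℝ) / ε) ^ j * x ^ (ε / (j + 1 : ℝ) * j) := by
          rw [mul_pow, Real.rpow_mul hx0, Real.rpow_natCast]
      _ ≤ _ := by
          gcongr
          rw [div_mul_eq_mul_div, div_le_iff₀ (by positivity)]
          nlinarith
  choose C hC hb using hmono
  refine ⟨∑ j ∈ range (Q.natDegree + 1), |Q.coeff j| * C j,
    Finset.sum_nonneg fun j _ => mul_nonneg (abs_nonneg _) (hC j), fun x hx => ?_⟩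
  rw [Polynomial.eval_eq_sum_range, Finset.sum_mul]
  refine (Finset.abs_sum_le_sum_abs _ _).trans (Finset.sum_le_sum fun j _ => ?_)
  rw [abs_mul, abs_of_nonneg (pow_nonneg (Real.log_nonneg hx) j), mul_assoc]
  exact mul_le_mul_of_nonneg_left (hb j x hx) (abs_nonneg _)

theorem Polynomial.exists_derivative_eq (Q : Polynomial ℝ) :
    ∃ R : Polynomial ℝ, Polynomial.derivative R = Q := by
  induction Q using Polynomial.induction_on' with
  | add p q hp hq =>
    obtain ⟨R, rfl⟩ := hp
    obtain ⟨R', rfl⟩ := hq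
    exact ⟨R + R', by simp⟩
  | monomial n a =>
    refine ⟨Polynomial.monomial (n + 1) (a / (n + 1)), ?_⟩
    rw [Polynomial.derivative_monomial]
    congr 1
    have : (n : ℝ) + 1 ≠ 0 := by positivity
    push_cast
    field_simp

theorem continuousOn_eval_log (Q : Polynomial ℝ) {s : Set ℝ} (hs : s ⊆ Set.Ioi 0) :
    ContinuousOn (fun x => Q.eval (Real.log x)) s :=
  Q.continuous.comp_continuousOn
    (Real.continuousOn_log.mono fun x hx => by simpa using (hs hx).ne')

theorem integrableOn_div_of_rpow_bound {e : ℝ → ℝ} (hm : Measurable e) {C δ : ℝ} (hδ : 0 < δ)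
    (h : ∀ x : ℝ, 1 ≤ x → |e x| ≤ C * x ^ (-δ)) :
    IntegrableOn (fun u => e u / u) (Set.Ioi 1) := by
  refine Integrable.mono' ((integrableOn_Ioi_rpow_of_lt (a := -δ - 1) (by linarith)
    one_pos).const_mul C) (hm.div measurable_id).aestronglyMeasurable ?_
  refine (ae_restrict_iff' measurableSet_Ioi).2 (.of_forall fun u hu => ?_)
  have hu0 : 0 < u := lt_trans one_pos hu
  rw [Real.norm_eq_abs, abs_div, abs_of_pos hu0, Real.rpow_sub_one hu0.ne', ← mul_div_assoc]
  gcongr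
  exact h u (le_of_lt hu)

theorem exists_integral_div_bound {e : ℝ → ℝ} (hm : Measurable e) {C δ : ℝ} (hδ : 0 < δ)
    (h : ∀ x : ℝ, 1 ≤ x → |e x| ≤ C * x ^ (-δ)) :
    ∃ c : ℝ, ∀ x : ℝ, 1 ≤ x → |(∫ u in (1 : ℝ)..x, e u / u) - c| ≤ C / δ * x ^ (-δ) := by
  have hi := integrableOn_div_of_rpow_bound hm hδ h
  refine ⟨∫ u in Set.Ioi (1 : ℝ), e u / u, fun x hx => ?_⟩
  have hx0 : 0 < x := by linarith
  rw [← intervalIntegral.integral_Ioi_sub_Ioi hi hx, sub_sub_cancel_left, abs_neg]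
  have hr := integrableOn_Ioi_rpow_of_lt (a := -δ - 1) (by linarith) hx0
  calc |∫ u in Set.Ioi x, e u / u| ≤ ∫ u in Set.Ioi x, C * u ^ (-δ - 1) := by
        rw [← Real.norm_eq_abs]
        refine norm_integral_le_of_norm_le (hr.const_mul C) ?_
        refine (ae_restrict_iff' measurableSet_Ioi).2 (.of_forall fun u hu => ?_)
        have hu1 : 1 ≤ u := hx.trans (le_of_lt hu)
        have hu0 : 0 < u := by linarith
        rw [Real.norm_eq_abs, abs_div, abs_of_pos hu0, Real.rpow_sub_one hu0.ne', ← mul_div_assoc]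
        gcongr
        exact h u hu1
    _ = C / δ * x ^ (-δ) := by
        rw [integral_const_mul, integral_Ioi_rpow_of_lt (by linarith) hx0]
        rw [show -δ - 1 + 1 = -δ by ring]
        field_simp

theorem integral_eval_log_div {R : Polynomial ℝ} {x : ℝ} (hx : 1 ≤ x) :
    (∫ u in (1 : ℝ)..x, (Polynomial.derivative R).eval (Real.log u) / u) =
      R.eval (Real.log x) - R.eval 0 := by
  have hsub : Set.uIcc 1 x ⊆ Set.Ioi 0 := by
    rw [Set.uIcc_of_le hx]
    exact fun u hu => lt_of_lt_of_le one_pos hu.1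
  rw [intervalIntegral.integral_eq_sub_of_hasDerivAt (f := fun u => R.eval (Real.log u))]
  · simp
  · intro u hu
    have := HasDerivAt.comp (h₂ := fun y => R.eval y) u (R.hasDerivAt (Real.log u))
      (Real.hasDerivAt_log (hsub hu).ne')
    rwa [← div_eq_mul_inv] at this
  · exact ((continuousOn_eval_log _ hsub).div continuousOn_id
      fun u hu => (hsub hu).ne').intervalIntegrable

theorem HasLogPoly.integral {f : ℝ → ℝ} {Q : Polynomial ℝ} (hm : Measurable f)
    (hf : HasLogPoly f Q) :
    ∃ R : Polynomial ℝ, HasLogPoly (fun x => ∫ u in (1 : ℝ)..x, f u / u) R := by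
  obtain ⟨C, δ, hC, hδ, h⟩ := hf
  obtain ⟨R, rfl⟩ := Polynomial.exists_derivative_eq Q
  have hme : Measurable fun u => f u - (Polynomial.derivative R).eval (Real.log u) :=
    hm.sub ((Polynomial.continuous _).measurable.comp Real.measurable_log)
  obtain ⟨c, hc⟩ := exists_integral_div_bound hme hδ h
  refine ⟨R + Polynomial.C (c - R.eval 0), C / δ, δ, by positivity, hδ, fun x hx => ?_⟩
  have hsub : Set.uIcc 1 x ⊆ Set.Ioi 0 := by
    rw [Set.uIcc_of_le hx]
    exact fun u hu => lt_of_lt_of_le one_pos hu.1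
  have hi1 : IntervalIntegrable (fun u => (f u - (Polynomial.derivative R).eval (Real.log u)) / u)
      volume 1 x := by
    rw [intervalIntegrable_iff_integrableOn_Ioc_of_le hx]
    exact (integrableOn_div_of_rpow_bound hme hδ h).mono_set Set.Ioc_subset_Ioi_self
  have hi2 : IntervalIntegrable (fun u => (Polynomial.derivative R).eval (Real.log u) / u)
      volume 1 x := ((continuousOn_eval_log _ hsub).div continuousOn_id
      fun u hu => (hsub hu).ne').intervalIntegrable
  have hsplit : (∫ u in (1 : ℝ)..x, f u / u) =
      (∫ u in (1 : ℝ)..x, (f u - (Polynomial.derivative R).eval (Real.log u)) / u) +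
        (R.eval (Real.log x) - R.eval 0) := by
    rw [← integral_eval_log_div hx, ← intervalIntegral.integral_add hi1 hi2]
    refine intervalIntegral.integral_congr fun u _ => ?_
    ring
  have := hc x hx
  simp only [hsplit, Polynomial.eval_add, Polynomial.eval_C]
  convert this using 2
  ring

theorem hasLogPoly_harmonic :
    HasLogPoly (fun x => ∑ n ∈ Icc 1 ⌊x⌋₊, (n : ℝ)⁻¹)
      (Polynomial.X + Polynomial.C Real.eulerMascheroniConstant) := by
  refine ⟨2, 1, by norm_num, one_pos, fun x hx => ?_⟩
  have hx0 : 0 < x := by linarith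
  set n := ⌊x⌋₊ with hn
  have hn1 : 1 ≤ n := Nat.le_floor (by simpa using hx)
  have hn0 : (1 : ℝ) ≤ n := by exact_mod_cast hn1
  have hnx : (n : ℝ) ≤ x := Nat.floor_le hx0.le
  have hxn : x < n + 1 := Nat.lt_floor_add_one x
  have hH : ∑ i ∈ Icc 1 n, (i : ℝ)⁻¹ = (harmonic n : ℝ) := by
    rw [harmonic_eq_sum_Icc]; push_cast; rfl
  have h1 := Real.eulerMascheroniSeq_lt_eulerMascheroniConstant n
  have h2 := Real.eulerMascheroniConstant_lt_eulerMascheroniSeq' n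
  rw [Real.eulerMascheroniSeq] at h1
  rw [Real.eulerMascheroniSeq', if_neg (by omega)] at h2
  have h3 : Real.log n ≤ Real.log x := Real.log_le_log (by linarith) hnx
  have h4 : Real.log x ≤ Real.log (n + 1) := Real.log_le_log hx0 hxn.le
  have h5 : Real.log (n + 1) - Real.log n ≤ 2 * x⁻¹ := by
    rw [← Real.log_div (by positivity) (by positivity)]
    refine (Real.log_le_sub_one_of_pos (by positivity)).trans ?_
    rw [← div_eq_mul_inv, add_div, div_self (by positivity), add_sub_cancel_left,
      div_le_div_iff₀ (by positivity) hx0]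
    linarith
  simp only [← hn]
  rw [hH, Real.rpow_neg_one, Polynomial.eval_add, Polynomial.eval_X, Polynomial.eval_C, abs_le]
  constructor <;> linarith

theorem measurable_sum_Icc_floor {h : ℕ → ℝ → ℝ} (hh : ∀ n, Measurable (h n)) :
    Measurable fun x : ℝ => ∑ n ∈ Icc 1 ⌊x⌋₊, h n x := by
  have : Measurable fun p : ℕ × ℝ => ∑ n ∈ Icc 1 p.1, h n p.2 :=
    measurable_from_prod_countable_right fun m => by
      change Measurable fun y => ∑ n ∈ Icc 1 m, h n y
      exact Finset.measurable_sum _ fun n _ => hh n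
  exact this.comp (Nat.measurable_floor.prodMk measurable_id)

/-- `∑_{n ≤ x} log(x/n)^j / n`. -/
noncomputable def logHarmonic (j : ℕ) (x : ℝ) : ℝ :=
  ∑ n ∈ Icc 1 ⌊x⌋₊, Real.log (x / n) ^ j / n

theorem measurable_logHarmonic (j : ℕ) : Measurable (logHarmonic j) :=
  measurable_sum_Icc_floor fun _ =>
    ((Real.measurable_log.comp (measurable_id.div_const _)).pow_const j).div_const _

theorem integral_log_div_pow {j n : ℕ} (hn : 1 ≤ n) {x : ℝ} (hx : (n : ℝ) ≤ x) :
    IntegrableOn (fun u => Real.log (u / n) ^ j / n / u) (Set.Ioc n x) ∧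
    (∫ u in (n : ℝ)..x, Real.log (u / n) ^ j / n / u) =
      Real.log (x / n) ^ (j + 1) / n / (j + 1) := by
  have hn0 : (0 : ℝ) < n := by exact_mod_cast hn
  have hpos : ∀ u ∈ Set.uIcc (n : ℝ) x, 0 < u := by
    intro u hu
    rw [Set.uIcc_of_le hx] at hu
    exact hn0.trans_le hu.1
  have hc : IntervalIntegrable (fun u => Real.log (u / n) ^ j / n / u) volume n x := by
    refine ContinuousOn.intervalIntegrable fun u hu => ContinuousAt.continuousWithinAt ?_
    have := hpos u hu
    have h1 : u / n ≠ 0 := by positivity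
    have h2 : u ≠ 0 := this.ne'
    exact ((((continuousAt_id.div_const _).log h1).pow j).div_const _).div continuousAt_id h2
  refine ⟨(intervalIntegrable_iff_integrableOn_Ioc_of_le hx).1 hc, ?_⟩
  rw [intervalIntegral.integral_eq_sub_of_hasDerivAt
    (f := fun u => Real.log (u / n) ^ (j + 1) / n / (j + 1)) _ hc]
  · simp [div_self hn0.ne']
  · intro u hu
    have hu0 := hpos u hu
    have h1 : HasDerivAt (fun u : ℝ => Real.log (u / n)) (1 / n / (u / n)) u :=
      ((hasDerivAt_id u).div_const _).log (by simp only [id]; positivity)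
    have h2 := ((h1.pow (j + 1)).div_const (n : ℝ)).div_const ((j : ℝ) + 1)
    refine h2.congr_deriv ?_
    simp only [Nat.add_sub_cancel]
    push_cast
    field_simp

theorem logHarmonic_succ (j : ℕ) {x : ℝ} (hx : 1 ≤ x) :
    logHarmonic (j + 1) x = (j + 1) * ∫ u in (1 : ℝ)..x, logHarmonic j u / u := by
  have hx0 : 0 ≤ x := by linarith
  set h : ℕ → ℝ → ℝ := fun n u => Real.log (u / n) ^ j / n / u with hh
  have hset : ∀ n ∈ Icc 1 ⌊x⌋₊,
      (Set.Ioc 1 x ∩ Set.Ici (n : ℝ) : Set ℝ) =ᵐ[volume] Set.Ioc (n : ℝ) x := by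
    intro n hn
    have h1 : (1 : ℝ) ≤ n := by exact_mod_cast (Finset.mem_Icc.1 hn).1
    have : Set.Ioc (n : ℝ) x = Set.Ioc 1 x ∩ Set.Ioi (n : ℝ) := by
      ext u
      simp only [Set.mem_Ioc, Set.mem_inter_iff, Set.mem_Ioi]
      constructor
      · rintro ⟨a, b⟩; exact ⟨⟨by linarith, b⟩, a⟩
      · rintro ⟨⟨_, b⟩, a⟩; exact ⟨a, b⟩
    rw [this]
    exact (ae_eq_refl _).inter Ioi_ae_eq_Ici.symm
  have key : ∀ n ∈ Icc 1 ⌊x⌋₊, IntegrableOn ((Set.Ici (n : ℝ)).indicator (h n)) (Set.Ioc 1 x) ∧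
      (∫ u in Set.Ioc 1 x, (Set.Ici (n : ℝ)).indicator (h n) u) =
        Real.log (x / n) ^ (j + 1) / n / (j + 1) := by
    intro n hn
    have hn1 := (Finset.mem_Icc.1 hn).1
    have hnx : (n : ℝ) ≤ x := (Nat.le_floor_iff hx0).1 (Finset.mem_Icc.1 hn).2
    obtain ⟨hi, hv⟩ := integral_log_div_pow (j := j) hn1 hnx
    constructor
    · rw [IntegrableOn, integrable_indicator_iff measurableSet_Ici, IntegrableOn,
        Measure.restrict_restrict measurableSet_Ici, Set.inter_comm,
        Measure.restrict_congr_set (hset n hn)]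
      exact hi
    · rw [setIntegral_indicator measurableSet_Ici, setIntegral_congr_set (hset n hn),
        ← intervalIntegral.integral_of_le hnx]
      exact hv
  have heq : ∀ u ∈ Set.Ioc 1 x, logHarmonic j u / u =
      ∑ n ∈ Icc 1 ⌊x⌋₊, (Set.Ici (n : ℝ)).indicator (h n) u := by
    intro u hu
    have hu0 : 0 ≤ u := by linarith [hu.1]
    rw [logHarmonic, Finset.sum_div]
    refine Finset.sum_subset_zero_on_sdiff (Finset.Icc_subset_Icc_right
      (Nat.floor_le_floor hu.2)) (fun n hn => ?_) (fun n hn => ?_)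
    · rw [Set.indicator_of_notMem]
      simp only [Finset.mem_sdiff, Finset.mem_Icc, not_and, not_le] at hn
      simpa using (Nat.floor_lt hu0).1 (hn.2 hn.1.1)
    · rw [Set.indicator_of_mem]
      exact (Nat.le_floor_iff hu0).1 (Finset.mem_Icc.1 hn).2
  rw [intervalIntegral.integral_of_le hx, setIntegral_congr_fun measurableSet_Ioc heq,
    integral_finsetSum _ fun n hn => (key n hn).1, Finset.sum_congr rfl fun n hn => (key n hn).2,
    ← Finset.sum_div, mul_div_cancel₀ _ (by positivity)]
  rfl

theorem exists_hasLogPoly_logHarmonic (j : ℕ) : ∃ Q, HasLogPoly (logHarmonic j) Q := by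
  induction j with
  | zero => exact ⟨_, hasLogPoly_harmonic.congr fun x _ => by simp [logHarmonic]⟩
  | succ j ih =>
    obtain ⟨Q, hQ⟩ := ih
    obtain ⟨R, hR⟩ := hQ.integral (measurable_logHarmonic j)
    exact ⟨_, (hR.const_mul (j + 1)).congr fun x hx => logHarmonic_succ j hx⟩

/-- The sum of `G (x / n)` over `N < n ≤ x` is well approximated by the corresponding integral. -/
def SumIntegralClose (G : ℝ → ℝ) : Prop :=
  (∀ y : ℝ, 1 ≤ y → IntervalIntegrable (fun u => G u / u ^ 2) volume 1 y) ∧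
  ∃ K : ℝ, 0 ≤ K ∧ ∀ (x : ℝ) (N : ℕ), 1 ≤ N → (N : ℝ) ≤ x →
    |∑ n ∈ Ioc N ⌊x⌋₊, G (x / n) - x * ∫ u in (1 : ℝ)..x / N, G u / u ^ 2| ≤
      K * (x / N) ^ (5 / 4 : ℝ)

theorem SumIntegralClose.add {F G : ℝ → ℝ} (hF : SumIntegralClose F) (hG : SumIntegralClose G) :
    SumIntegralClose (fun u => F u + G u) := by
  obtain ⟨hFi, K, hK, hFb⟩ := hF
  obtain ⟨hGi, K', hK', hGb⟩ := hG
  have he : (fun u => (F u + G u) / u ^ 2) = fun u => F u / u ^ 2 + G u / u ^ 2 := by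
    funext u; exact add_div _ _ _
  refine ⟨fun y hy => by rw [he]; exact (hFi y hy).add (hGi y hy), K + K', by positivity,
    fun x N hN hNx => ?_⟩
  have hN0 : (0 : ℝ) < N := by exact_mod_cast hN
  have hy : 1 ≤ x / N := (one_le_div hN0).2 hNx
  rw [he, intervalIntegral.integral_add (hFi _ hy) (hGi _ hy), Finset.sum_add_distrib, mul_add,
    add_mul, add_sub_add_comm]
  exact (abs_add_le _ _).trans (add_le_add (hFb x N hN hNx) (hGb x N hN hNx))

theorem SumIntegralClose.const_mul {F : ℝ → ℝ} (hF : SumIntegralClose F) (c : ℝ) :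
    SumIntegralClose (fun u => c * F u) := by
  obtain ⟨hFi, K, hK, hFb⟩ := hF
  have he : (fun u => c * F u / u ^ 2) = fun u => c * (F u / u ^ 2) := by
    funext u; exact mul_div_assoc _ _ _
  refine ⟨fun y hy => by rw [he]; exact (hFi y hy).const_mul c, |c| * K, by positivity,
    fun x N hN hNx => ?_⟩
  rw [he, intervalIntegral.integral_const_mul, ← Finset.mul_sum, mul_left_comm, ← mul_sub, abs_mul,
    mul_assoc]
  exact mul_le_mul_of_nonneg_left (hFb x N hN hNx) (abs_nonneg c)

theorem sumIntegralClose_sum {ι : Type*} (s : Finset ι) {F : ι → ℝ → ℝ}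
    (h : ∀ i ∈ s, SumIntegralClose (F i)) : SumIntegralClose (fun u => ∑ i ∈ s, F i u) := by
  classical
  induction s using Finset.induction_on with
  | empty => exact ⟨fun y _ => by simp, 0, le_rfl, fun x N _ _ => by simp⟩
  | insert a s ha ih =>
    simp only [Finset.sum_insert ha]
    exact (h a (by simp)).add (ih fun i hi => h i (by simp [hi]))

theorem Monotone.intervalIntegrable_div_sq {G : ℝ → ℝ} (hG : Monotone G) {a b : ℝ} (ha : 0 < a)
    (hb : 0 < b) : IntervalIntegrable (fun u => G u / u ^ 2) volume a b := by
  have hpos : ∀ u ∈ Set.uIcc a b, 0 < u := fun u hu => (lt_min ha hb).trans_le hu.1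
  simp only [div_eq_mul_inv]
  exact hG.intervalIntegrable.mul_continuousOn (ContinuousOn.inv₀ (by fun_prop)
    fun u hu => pow_ne_zero 2 (hpos u hu).ne')

theorem Monotone.abs_sum_sub_integral_le {G : ℝ → ℝ} (hG : Monotone G)
    (hG0 : ∀ u < 1, G u = 0) {x : ℝ} {N : ℕ} (hN : 1 ≤ N) (hNx : (N : ℝ) ≤ x) :
    |∑ n ∈ Ioc N ⌊x⌋₊, G (x / n) - x * ∫ u in (1 : ℝ)..x / N, G u / u ^ 2| ≤ G (x / N) := by
  have hN0 : (0 : ℝ) < N := by exact_mod_cast hN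
  have hx0 : 0 < x := hN0.trans_le hNx
  set M : ℕ := ⌊x⌋₊ + 1 with hM
  have hxM : x < M := by simpa [hM] using Nat.lt_floor_add_one x
  have hNf : N ≤ ⌊x⌋₊ := (Nat.le_floor_iff hx0.le).2 hNx
  have hNM : N ≤ M := by omega
  have hM0 : (0 : ℝ) < M := hx0.trans hxM
  have hxM1 : x / M < 1 := (div_lt_one hM0).2 hxM
  have hanti : AntitoneOn (fun t : ℝ => G (x / t)) (Set.Icc N M) := by
    intro s hs t ht hst
    exact hG (div_le_div_of_nonneg_left hx0.le (hN0.trans_le hs.1) hst)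
  have hlow := hanti.sum_le_integral_Ico hNM
  have hup := hanti.integral_le_sum_Ico hNM
  have hs1 : ∑ i ∈ Ico N M, G (x / ((i + 1 : ℕ) : ℝ)) = ∑ n ∈ Ioc N ⌊x⌋₊, G (x / n) := by
    rw [Finset.sum_Ico_add' (fun n : ℕ => G (x / (n : ℝ))) N M 1, ← Finset.Ico_add_one_add_one_eq_Ioc,
      Finset.sum_Ico_succ_top (by omega : N + 1 ≤ M), hG0 _ hxM1, add_zero]
  have hs2 : ∑ i ∈ Ico N M, G (x / (i : ℝ)) = G (x / N) + ∑ n ∈ Ioc N ⌊x⌋₊, G (x / n) := by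
    rw [Finset.sum_eq_sum_Ico_succ_bot (by omega), ← Finset.Ico_add_one_add_one_eq_Ioc]
  have hpos : ∀ t ∈ Set.uIcc (N : ℝ) M, 0 < t := fun t ht => (lt_min hN0 hM0).trans_le ht.1
  have hsub : (∫ t in (N : ℝ)..M, G (x / t)) = x * ∫ u in (1 : ℝ)..x / N, G u / u ^ 2 := by
    have hcv := intervalIntegral.integral_deriv_smul_comp_of_deriv_nonpos
      (a := (N : ℝ)) (b := M) (f := fun t => x / t) (f' := fun t => -(x / t ^ 2))
      (g := fun u => G u / u ^ 2)
      (continuousOn_const.div continuousOn_id fun t ht => (hpos t ht).ne')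
      (fun t ht => by
        have := hpos t ⟨ht.1.le, ht.2.le⟩
        have h := (hasDerivAt_const t x).div (hasDerivAt_id t) this.ne'
        refine h.congr_deriv ?_
        simp only [id]
        ring)
      (fun t ht => by simp only [neg_nonpos]; positivity)
    have h1 : (∫ t in (N : ℝ)..M, -(x / t ^ 2) • ((fun u => G u / u ^ 2) ∘ fun t => x / t) t) =
        -(x⁻¹ * ∫ t in (N : ℝ)..M, G (x / t)) := by
      rw [← intervalIntegral.integral_const_mul, ← intervalIntegral.integral_neg]
      refine intervalIntegral.integral_congr fun t ht => ?_
      have := hpos t ht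
      simp only [Function.comp_apply, smul_eq_mul]
      field_simp
    have h2 : (∫ u in (x / M)..1, G u / u ^ 2) = 0 := by
      rw [intervalIntegral.integral_of_le hxM1.le, integral_Ioc_eq_integral_Ioo]
      refine setIntegral_eq_zero_of_forall_eq_zero fun u hu => ?_
      rw [hG0 u hu.2, zero_div]
    have h3 := intervalIntegral.integral_add_adjacent_intervals
      (hG.intervalIntegrable_div_sq (div_pos hx0 hM0) one_pos)
      (hG.intervalIntegrable_div_sq one_pos (div_pos hx0 hN0))
    rw [h1, intervalIntegral.integral_symm (x / M) (x / N), ← h3, h2, zero_add, neg_inj] at hcv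
    rw [← hcv, mul_inv_cancel_left₀ hx0.ne']
  rw [hs1, hsub] at hlow
  rw [hs2, hsub] at hup
  rw [abs_le]
  constructor
  · linarith
  · have : 0 ≤ G (x / N) := by
      have := hG (show x / M ≤ x / N from
        div_le_div_of_nonneg_left hx0.le hN0 (by exact_mod_cast hNM))
      rwa [hG0 _ hxM1] at this
    linarith

theorem Monotone.sumIntegralClose {G : ℝ → ℝ} (hG : Monotone G) (hG0 : ∀ u < 1, G u = 0)
    {K : ℝ} (hK : 0 ≤ K) (hb : ∀ u, 1 ≤ u → G u ≤ K * u ^ (5 / 4 : ℝ)) : SumIntegralClose G :=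
  ⟨fun y hy => hG.intervalIntegrable_div_sq one_pos (by linarith), K, hK, fun x N hN hNx =>
    (hG.abs_sum_sub_integral_le hG0 hN hNx).trans
      (hb _ ((one_le_div (by exact_mod_cast hN)).2 hNx))⟩

theorem SumIntegralClose.exists_hasLogPoly {E : ℝ → ℝ} (hE : SumIntegralClose E)
    (hm : Measurable E) {C δ : ℝ} (hC : 0 ≤ C) (hδ : 0 < δ) (hδ1 : δ ≤ 1)
    (hb : ∀ u : ℝ, 1 ≤ u → |E u / u| ≤ C * u ^ (-δ)) :
    ∃ Q, HasLogPoly (fun x => (∑ n ∈ Icc 1 ⌊x⌋₊, E (x / n)) / x) Q := by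
  obtain ⟨-, K, hK, hsum⟩ := hE
  obtain ⟨c, hc⟩ := exists_integral_div_bound (hm.div measurable_id) hδ hb
  obtain ⟨L, hL, hlog⟩ := exists_eval_log_bound (1 + Polynomial.X) (show 0 < δ / 4 by positivity)
  refine ⟨Polynomial.C c, C * L + K * 4 + C / δ, δ / 4, by positivity, by positivity,
    fun x hx => ?_⟩
  have hx0 : 0 < x := by linarith
  have hs1 : 1 ≤ √x := Real.one_le_sqrt.2 hx
  have hss : √x * √x = x := Real.mul_self_sqrt hx0.le
  set N := ⌊√x⌋₊ with hN
  have hN1 : 1 ≤ N := Nat.le_floor (by simpa using hs1)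
  have hN0 : (0 : ℝ) < N := by exact_mod_cast hN1
  have hNs : (N : ℝ) ≤ √x := Nat.floor_le (by positivity)
  have hsN : √x < N + 1 := Nat.lt_floor_add_one _
  have hN1' : (1 : ℝ) ≤ N := by exact_mod_cast hN1
  have hNx : (N : ℝ) ≤ x := by nlinarith
  have hNf : N ≤ ⌊x⌋₊ := Nat.le_floor hNx
  have hy1 : √x ≤ x / N := by rw [le_div_iff₀ hN0]; nlinarith
  have hy2 : x / N ≤ 2 * √x := by rw [div_le_iff₀ hN0]; nlinarith
  have hsq : √x = x ^ (1 / 2 : ℝ) := Real.sqrt_eq_rpow x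
  have hneg : ∀ u, √x ≤ u → u ^ (-δ) ≤ x ^ (-(δ / 2)) := by
    intro u hu
    calc u ^ (-δ) ≤ √x ^ (-δ) :=
          Real.rpow_le_rpow_of_nonpos (by linarith) hu (by linarith)
      _ = x ^ (-(δ / 2)) := by rw [hsq, ← Real.rpow_mul hx0.le]; ring_nf
  have hsplit : ∑ n ∈ Icc 1 ⌊x⌋₊, E (x / n) =
      ∑ n ∈ Icc 1 N, E (x / n) + ∑ n ∈ Ioc N ⌊x⌋₊, E (x / n) := by
    simp only [← Finset.Ico_add_one_right_eq_Icc, ← Finset.Ico_add_one_add_one_eq_Ioc]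
    exact (Finset.sum_Ico_consecutive _ (by omega) (by omega)).symm
  have hA : |(∑ n ∈ Icc 1 N, E (x / n)) / x| ≤ C * L * x ^ (-(δ / 4)) := by
    have hterm : ∀ n ∈ Icc 1 N, |E (x / n) / x| ≤ (n : ℝ)⁻¹ * (C * x ^ (-(δ / 2))) := by
      intro n hn
      rw [Finset.mem_Icc] at hn
      have hn0 : (0 : ℝ) < n := by exact_mod_cast hn.1
      have hnN : (n : ℝ) ≤ N := by exact_mod_cast hn.2
      have h1 : √x ≤ x / n := hy1.trans (div_le_div_of_nonneg_left hx0.le hn0 hnN)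
      have h2 : E (x / n) / x = (n : ℝ)⁻¹ * (E (x / n) / (x / n)) := by field_simp
      rw [h2, abs_mul, abs_of_pos (inv_pos.2 hn0)]
      refine mul_le_mul_of_nonneg_left ?_ (by positivity)
      exact (hb _ (hs1.trans h1)).trans (mul_le_mul_of_nonneg_left (hneg _ h1) hC)
    have hharm : ∑ n ∈ Icc 1 N, (n : ℝ)⁻¹ ≤ L * x ^ (δ / 4) := by
      have h1 := harmonic_le_one_add_log N
      rw [harmonic_eq_sum_Icc] at h1
      push_cast at h1
      have h2 := (le_abs_self _).trans (hlog x hx)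
      simp only [Polynomial.eval_add, Polynomial.eval_one, Polynomial.eval_X] at h2
      have h3 := Real.log_le_log hN0 hNx
      linarith
    calc |(∑ n ∈ Icc 1 N, E (x / n)) / x| ≤ ∑ n ∈ Icc 1 N, |E (x / n) / x| := by
          rw [Finset.sum_div]; exact Finset.abs_sum_le_sum_abs _ _
      _ ≤ ∑ n ∈ Icc 1 N, (n : ℝ)⁻¹ * (C * x ^ (-(δ / 2))) := Finset.sum_le_sum hterm
      _ ≤ L * x ^ (δ / 4) * (C * x ^ (-(δ / 2))) := by
          rw [← Finset.sum_mul]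
          exact mul_le_mul_of_nonneg_right hharm (by positivity)
      _ = C * L * (x ^ (δ / 4) * x ^ (-(δ / 2))) := by ring
      _ = C * L * x ^ (-(δ / 4)) := by rw [← Real.rpow_add hx0]; ring_nf
  have hB : |(∑ n ∈ Ioc N ⌊x⌋₊, E (x / n)) / x - ∫ u in (1 : ℝ)..x / N, E u / u ^ 2| ≤
      K * 4 * x ^ (-(δ / 4)) := by
    have h1 := hsum x N hN1 hNx
    have h2 : (∑ n ∈ Ioc N ⌊x⌋₊, E (x / n)) / x - ∫ u in (1 : ℝ)..x / N, E u / u ^ 2 =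
        (∑ n ∈ Ioc N ⌊x⌋₊, E (x / n) - x * ∫ u in (1 : ℝ)..x / N, E u / u ^ 2) / x := by
      field_simp
    rw [h2, abs_div, abs_of_pos hx0, div_le_iff₀ hx0]
    refine h1.trans ?_
    have h3 : (x / N) ^ (5 / 4 : ℝ) ≤ 4 * x ^ (5 / 8 : ℝ) := by
      calc (x / N) ^ (5 / 4 : ℝ) ≤ (2 * √x) ^ (5 / 4 : ℝ) :=
            Real.rpow_le_rpow (by positivity) hy2 (by norm_num)
        _ = 2 ^ (5 / 4 : ℝ) * x ^ (5 / 8 : ℝ) := by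
            rw [Real.mul_rpow (by norm_num) (by positivity), hsq, ← Real.rpow_mul hx0.le]
            norm_num
        _ ≤ 2 ^ (2 : ℝ) * x ^ (5 / 8 : ℝ) := by
            gcongr <;> norm_num
        _ = 4 * x ^ (5 / 8 : ℝ) := by norm_num
    have h4 : x ^ (5 / 8 : ℝ) ≤ x ^ (-(δ / 4)) * x := by
      rw [← Real.rpow_add_one hx0.ne']
      exact Real.rpow_le_rpow_of_exponent_le hx (by linarith)
    calc K * (x / N) ^ (5 / 4 : ℝ) ≤ K * (4 * (x ^ (-(δ / 4)) * x)) := by gcongr; linarith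
      _ = K * 4 * x ^ (-(δ / 4)) * x := by ring
  have hC' : |(∫ u in (1 : ℝ)..x / N, E u / u ^ 2) - c| ≤ C / δ * x ^ (-(δ / 4)) := by
    have h1 := hc (x / N) (hs1.trans hy1)
    have h2 : (fun u => E u / u / u) = fun u => E u / u ^ 2 := by
      funext u; rw [div_div, pow_two]
    simp only [Pi.div_apply, id] at h1
    rw [h2] at h1
    refine h1.trans (mul_le_mul_of_nonneg_left ((hneg _ hy1).trans ?_) (by positivity))
    exact Real.rpow_le_rpow_of_exponent_le hx (by linarith)
  beta_reduce
  rw [Polynomial.eval_C, hsplit, add_div]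
  calc _ = |(∑ n ∈ Icc 1 N, E (x / n)) / x + ((∑ n ∈ Ioc N ⌊x⌋₊, E (x / n)) / x -
        ∫ u in (1 : ℝ)..x / N, E u / u ^ 2) + ((∫ u in (1 : ℝ)..x / N, E u / u ^ 2) - c)| := by
        congr 1; ring
    _ ≤ _ := (abs_add_le _ _).trans (add_le_add (abs_add_le _ _) le_rfl)
    _ ≤ C * L * x ^ (-(δ / 4)) + K * 4 * x ^ (-(δ / 4)) + C / δ * x ^ (-(δ / 4)) := by gcongr
    _ = _ := by ring

/-- `u * log u ^ j` for `u ≥ 1`, extended by `0`. -/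
noncomputable def logMonomial (j : ℕ) (u : ℝ) : ℝ := if 1 ≤ u then u * Real.log u ^ j else 0

theorem monotone_logMonomial (j : ℕ) : Monotone (logMonomial j) := by
  intro u v huv
  unfold logMonomial
  by_cases hv : 1 ≤ v
  · have hlv := Real.log_nonneg hv
    by_cases hu : 1 ≤ u
    · rw [if_pos hu, if_pos hv]
      have hlu := Real.log_nonneg hu
      have := Real.log_le_log (by linarith) huv
      gcongr
    · rw [if_neg hu, if_pos hv]
      positivity
  · rw [if_neg hv, if_neg fun hu => hv (hu.trans huv)]

theorem sumIntegralClose_logMonomial (j : ℕ) : SumIntegralClose (logMonomial j) := by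
  obtain ⟨K, hK, h⟩ := exists_eval_log_bound (Polynomial.X ^ j) (show (0 : ℝ) < 1 / 4 by norm_num)
  refine (monotone_logMonomial j).sumIntegralClose (fun u hu => if_neg (not_le.2 hu)) hK
    fun u hu => ?_
  have hu0 : 0 < u := by linarith
  have h1 := (le_abs_self _).trans (h u hu)
  simp only [Polynomial.eval_pow, Polynomial.eval_X] at h1
  rw [logMonomial, if_pos hu, show (5 / 4 : ℝ) = 1 / 4 + 1 by norm_num, Real.rpow_add_one hu0.ne']
  nlinarith

theorem exists_hasLogPoly_sum_div {F : ℝ → ℝ} (hF : Monotone F) (hF0 : ∀ u < 1, F u = 0)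
    {Q : Polynomial ℝ} (hQ : HasLogPoly (fun x => F x / x) Q) :
    ∃ R, HasLogPoly (fun x => (∑ n ∈ Icc 1 ⌊x⌋₊, F (x / n)) / x) R := by
  obtain ⟨C, δ, hC, hδ, hb⟩ := hQ
  set S : ℝ → ℝ := fun u => ∑ j ∈ range (Q.natDegree + 1), Q.coeff j * logMonomial j u with hS
  have hSeval : ∀ u, 1 ≤ u → S u = u * Q.eval (Real.log u) := by
    intro u hu
    rw [Polynomial.eval_eq_sum_range, Finset.mul_sum]
    refine Finset.sum_congr rfl fun j _ => ?_
    rw [logMonomial, if_pos hu]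
    ring
  have hFc : SumIntegralClose F := by
    obtain ⟨K, hK, h⟩ := exists_eval_log_bound Q (show (0 : ℝ) < 1 / 4 by norm_num)
    refine hF.sumIntegralClose hF0 (K := K + C) (by positivity) fun u hu => ?_
    have hu0 : 0 < u := by linarith
    have h1 := h u hu
    have h2 := hb u hu
    have h3 : u ^ (-δ) ≤ u ^ (1 / 4 : ℝ) := Real.rpow_le_rpow_of_exponent_le hu (by linarith)
    have h4 : F u / u ≤ (K + C) * u ^ (1 / 4 : ℝ) := by
      have := abs_le.1 h1
      have := abs_le.1 h2
      nlinarith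
    rw [div_le_iff₀ hu0] at h4
    rw [show (5 / 4 : ℝ) = 1 / 4 + 1 by norm_num, Real.rpow_add_one hu0.ne']
    linarith
  have hSc : SumIntegralClose S := sumIntegralClose_sum _ fun j _ =>
    (sumIntegralClose_logMonomial j).const_mul _
  have hSm : Measurable S := Finset.measurable_sum _ fun j _ =>
    (monotone_logMonomial j).measurable.const_mul _
  obtain ⟨R, hR⟩ := (hFc.add (hSc.const_mul (-1))).exists_hasLogPoly
    (hF.measurable.add (hSm.const_mul _)) hC (lt_min hδ one_pos) (min_le_right δ 1) fun u hu => by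
      have hu0 : 0 < u := by linarith
      have h1 : (F u + -1 * S u) / u = F u / u - Q.eval (Real.log u) := by
        rw [hSeval u hu]; field_simp; ring
      rw [h1]
      exact (hb u hu).trans (mul_le_mul_of_nonneg_left
        (Real.rpow_le_rpow_of_exponent_le hu (neg_le_neg (min_le_left _ _))) hC)
  choose P hP using exists_hasLogPoly_logHarmonic
  refine ⟨_, (hR.add (hasLogPoly_sum (range (Q.natDegree + 1)) fun j _ =>
    (hP j).const_mul (Q.coeff j))).congr fun x hx => ?_⟩
  have hx0 : 0 < x := by linarith
  have h1 : ∑ j ∈ range (Q.natDegree + 1), Q.coeff j * logHarmonic j x =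
      (∑ n ∈ Icc 1 ⌊x⌋₊, S (x / n)) / x := by
    simp only [hS, logHarmonic, Finset.mul_sum, Finset.sum_div]
    rw [Finset.sum_comm]
    refine Finset.sum_congr rfl fun n hn => Finset.sum_congr rfl fun j _ => ?_
    rw [Finset.mem_Icc, Nat.le_floor_iff hx0.le] at hn
    have hn0 : (0 : ℝ) < n := by exact_mod_cast hn.1
    rw [logMonomial, if_pos ((one_le_div hn0).2 hn.2)]
    field_simp
  rw [h1, ← add_div, ← Finset.sum_add_distrib]
  congr 1
  exact Finset.sum_congr rfl fun n _ => by ring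

/-- The summatory function of `dk k`. -/
noncomputable def dkSum (k : ℕ) (x : ℝ) : ℝ := ∑ n ∈ Icc 1 ⌊x⌋₊, (dk k n : ℝ)

theorem monotone_dkSum (k : ℕ) : Monotone (dkSum k) := fun _ _ h =>
  Finset.sum_le_sum_of_subset_of_nonneg
    (Finset.Icc_subset_Icc_right (Nat.floor_mono h)) fun _ _ _ => by positivity

theorem dkSum_of_lt_one (k : ℕ) {u : ℝ} (hu : u < 1) : dkSum k u = 0 := by
  rw [dkSum, Nat.floor_eq_zero.2 hu]
  rfl

theorem dkSum_succ (k : ℕ) (x : ℝ) :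
    dkSum (k + 1) x = ∑ n ∈ Icc 1 ⌊x⌋₊, dkSum k (x / n) := by
  have h := ArithmeticFunction.sum_Ioc_mul_eq_sum_sum ArithmeticFunction.zeta
    (ArithmeticFunction.zeta ^ k) ⌊x⌋₊
  rw [← pow_succ'] at h
  simp only [dkSum, dk, Nat.floor_div_natCast]
  have hI : ∀ N : ℕ, Icc 1 N = Ioc 0 N := fun N => rfl
  simp only [hI, ← Nat.cast_sum]
  rw [h]
  congr 1
  refine Finset.sum_congr rfl fun n hn => ?_
  rw [ArithmeticFunction.zeta_apply_ne (by have := (Finset.mem_Ioc.1 hn).1; omega), one_mul]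

theorem exists_hasLogPoly_dkSum (k : ℕ) : ∃ Q, HasLogPoly (fun x => dkSum k x / x) Q := by
  induction k with
  | zero =>
    refine ⟨0, 1, 1, zero_le_one, one_pos, fun x hx => ?_⟩
    have hx0 : 0 < x := by linarith
    have h1 : dkSum 0 x = 1 := by
      have : 1 ≤ ⌊x⌋₊ := Nat.le_floor (by simpa using hx)
      simp only [dkSum, dk, pow_zero, ArithmeticFunction.one_apply]
      simp [Finset.sum_ite_eq', this]
    simp [h1, Real.rpow_neg_one, abs_of_pos hx0]
  | succ k ih =>
    obtain ⟨Q, hQ⟩ := ih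
    simp only [dkSum_succ]
    exact exists_hasLogPoly_sum_div (monotone_dkSum k) (fun u hu => dkSum_of_lt_one k hu) hQ

theorem integrableOn_log_rpow_mul_rpow {a u : ℝ} (ha : -1 < a) (hu : 0 < u) :
    IntegrableOn (fun t => Real.log t ^ a * t ^ (-(1 + u))) (Set.Ioi 1) := by
  have h := integrableOn_rpow_mul_exp_neg_mul_rpow ha one_pos hu
  rw [← Real.log_one, ← integrableOn_comp_log_Ioi _ one_pos] at h
  refine h.congr_fun (fun t ht => ?_) measurableSet_Ioi
  have ht0 : 0 < t := lt_trans one_pos ht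
  simp only [Real.rpow_one, smul_eq_mul]
  rw [neg_add, Real.rpow_add ht0, Real.rpow_neg_one, Real.rpow_def_of_pos ht0,
    mul_comm (Real.log t) (-u)]
  ring

theorem integral_log_pow_mul_rpow (j : ℕ) {u : ℝ} (hu : 0 < u) :
    ∫ t in Set.Ioi (1 : ℝ), Real.log t ^ j * t ^ (-(1 + u)) =
      Nat.factorial j * u⁻¹ ^ (j + 1) := by
  have h := Real.integral_rpow_mul_exp_neg_mul_Ioi (a := j + 1) (by positivity) hu
  rw [← Real.log_one, ← integral_comp_log_Ioi _ one_pos, Real.Gamma_nat_eq_factorial] at h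
  rw [mul_comm, ← one_div, ← Real.rpow_natCast (1 / u) (j + 1), Nat.cast_add_one, ← h]
  refine setIntegral_congr_fun measurableSet_Ioi fun t ht => ?_
  have ht0 : 0 < t := lt_trans one_pos ht
  simp only [smul_eq_mul, add_sub_cancel_right, Real.rpow_natCast]
  rw [neg_add, Real.rpow_add ht0, Real.rpow_neg_one, Real.rpow_def_of_pos ht0 (-u),
    show Real.log t * -u = -(u * Real.log t) by ring]
  ring

/-- The Laplace transform of a polynomial, as a polynomial in the inverse of the variable. -/
noncomputable def laplacePoly : Polynomial ℝ →ₗ[ℝ] Polynomial ℝ :=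
  Polynomial.lsum fun j => (Nat.factorial j : ℝ) • Polynomial.monomial (j + 1)

theorem laplacePoly_monomial (j : ℕ) (a : ℝ) :
    laplacePoly (Polynomial.monomial j a) = Polynomial.monomial (j + 1) (Nat.factorial j * a) := by
  rw [laplacePoly, Polynomial.lsum_apply, Polynomial.sum_monomial_index _ _ (by simp)]
  simp [Polynomial.smul_monomial]

theorem coeff_laplacePoly (Q : Polynomial ℝ) (j : ℕ) :
    (laplacePoly Q).coeff (j + 1) = Nat.factorial j * Q.coeff j := by
  induction Q using Polynomial.induction_on' with
  | add p q hp hq => simp [hp, hq, mul_add]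
  | monomial n a =>
    rw [laplacePoly_monomial, Polynomial.coeff_monomial, Polynomial.coeff_monomial]
    by_cases h : n = j
    · simp [h]
    · simp [h]

theorem integral_eval_log_mul_rpow (Q : Polynomial ℝ) {u : ℝ} (hu : 0 < u) :
    IntegrableOn (fun t => Q.eval (Real.log t) * t ^ (-(1 + u))) (Set.Ioi 1) ∧
    ∫ t in Set.Ioi (1 : ℝ), Q.eval (Real.log t) * t ^ (-(1 + u)) =
      (laplacePoly Q).eval u⁻¹ := by
  induction Q using Polynomial.induction_on' with
  | add p q hp hq =>
    simp only [Polynomial.eval_add, add_mul, map_add]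
    exact ⟨hp.1.add hq.1, by rw [integral_add hp.1 hq.1, hp.2, hq.2]⟩
  | monomial n a =>
    simp only [Polynomial.eval_monomial, mul_assoc, laplacePoly_monomial]
    have h := integrableOn_log_rpow_mul_rpow (a := n) (by linarith [n.cast_nonneg (α := ℝ)]) hu
    simp only [Real.rpow_natCast] at h
    exact ⟨h.const_mul a, by rw [integral_const_mul, integral_log_pow_mul_rpow n hu]; ring⟩

theorem HasLogPoly.exists_integral_sub_laplacePoly_le {f : ℝ → ℝ} {Q : Polynomial ℝ}
    (hm : Measurable f) (hf : HasLogPoly f Q) :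
    ∃ B : ℝ, ∀ u : ℝ, 0 < u →
      |(∫ t in Set.Ioi (1 : ℝ), f t * t ^ (-(1 + u))) - (laplacePoly Q).eval u⁻¹| ≤ B := by
  obtain ⟨C, δ, hC, hδ, h⟩ := hf
  have hI := (integrableOn_Ioi_rpow_of_lt (a := -δ - 1) (by linarith) one_pos).const_mul C
  refine ⟨∫ t in Set.Ioi (1 : ℝ), C * t ^ (-δ - 1), fun u hu => ?_⟩
  obtain ⟨hQi, hQ⟩ := integral_eval_log_mul_rpow Q hu
  have hle : ∀ t ∈ Set.Ioi (1 : ℝ),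
      ‖(f t - Q.eval (Real.log t)) * t ^ (-(1 + u))‖ ≤ C * t ^ (-δ - 1) := by
    intro t ht
    have ht1 : 1 ≤ t := le_of_lt ht
    have ht0 : 0 < t := by linarith
    rw [norm_mul, Real.norm_eq_abs, Real.norm_of_nonneg (by positivity),
      sub_eq_add_neg (-δ), Real.rpow_add ht0, ← mul_assoc]
    gcongr
    · exact h t ht1
    · linarith
  have hae := (ae_restrict_iff' (μ := volume) measurableSet_Ioi).2 (.of_forall hle)
  have hD : IntegrableOn (fun t => (f t - Q.eval (Real.log t)) * t ^ (-(1 + u))) (Set.Ioi 1) :=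
    Integrable.mono' hI ((hm.sub ((Polynomial.continuous _).measurable.comp
      Real.measurable_log)).mul (measurable_id.pow_const _)).aestronglyMeasurable hae
  have hsum : (∫ t in Set.Ioi (1 : ℝ), f t * t ^ (-(1 + u))) - (laplacePoly Q).eval u⁻¹ =
      ∫ t in Set.Ioi (1 : ℝ), (f t - Q.eval (Real.log t)) * t ^ (-(1 + u)) := by
    rw [← hQ, sub_eq_iff_eq_add, ← integral_add hD hQi]
    refine integral_congr_ae (.of_forall fun t => ?_)
    ring
  rw [hsum, ← Real.norm_eq_abs]
  exact norm_integral_le_of_norm_le hI hae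

theorem LSeriesHasSum_dk (k : ℕ) {s : ℂ} (hs : 1 < s.re) :
    LSeriesHasSum (fun n => (dk k n : ℂ)) s (riemannZeta s ^ k) := by
  induction k with
  | zero =>
    have h : (fun n => (dk 0 n : ℂ)) = LSeries.delta := by
      rw [← ArithmeticFunction.one_eq_delta]
      ext n
      simp only [dk, pow_zero, ArithmeticFunction.one_apply]
      split_ifs <;> simp
    rw [h, pow_zero, LSeriesHasSum, funext (LSeries.term_delta s)]
    exact hasSum_ite_eq (1 : ℕ) (1 : ℂ)
  | succ k ih =>
    have h := ArithmeticFunction.LSeriesHasSum_mul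
      (f := ((ArithmeticFunction.zeta ^ k : ArithmeticFunction ℕ) : ArithmeticFunction ℂ))
      (g := ((ArithmeticFunction.zeta : ArithmeticFunction ℕ) : ArithmeticFunction ℂ)) ih
      (ArithmeticFunction.LSeriesHasSum_zeta hs)
    rw [← ArithmeticFunction.natCoe_mul, ← pow_succ] at h
    rw [pow_succ]
    exact h

theorem riemannZeta_pow_eq_integral (k : ℕ) {u : ℝ} (hu : 0 < u) :
    riemannZeta (1 + u) ^ k =
      (((1 + u) * ∫ t in Set.Ioi (1 : ℝ), dkSum k t / t * t ^ (-(1 + u)) : ℝ) : ℂ) := by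
  have hs : 1 < (1 + u : ℂ).re := by simpa using hu
  obtain ⟨Q, C, δ, hC, hδ, h⟩ := exists_hasLogPoly_dkSum k
  obtain ⟨K, hK, hlog⟩ := exists_eval_log_bound Q (show 0 < u / 2 by positivity)
  have hO : (fun n : ℕ => ∑ i ∈ Icc 1 n, (dk k i : ℝ)) =O[atTop]
      fun n : ℕ => (n : ℝ) ^ (1 + u / 2) := by
    refine IsBigO.of_bound (C + K) ?_
    filter_upwards [eventually_ge_atTop 1] with n hn
    have hn1 : (1 : ℝ) ≤ n := by exact_mod_cast hn
    have hn0 : (0 : ℝ) < n := by linarith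
    have h1 := abs_le.1 (h n hn1)
    have h2 := abs_le.1 (hlog n hn1)
    have h3 : (n : ℝ) ^ (-δ) ≤ (n : ℝ) ^ (u / 2) :=
      Real.rpow_le_rpow_of_exponent_le hn1 (by linarith)
    have h4 : dkSum k n / n ≤ (C + K) * (n : ℝ) ^ (u / 2) := by nlinarith
    rw [div_le_iff₀ hn0] at h4
    rw [Real.norm_of_nonneg (by positivity), Real.norm_of_nonneg (by positivity), add_comm 1,
      Real.rpow_add_one hn0.ne']
    simp only [dkSum, Nat.floor_natCast] at h4
    linarith
  have hL := LSeries_eq_mul_integral_of_nonneg (fun n => (dk k n : ℝ)) (r := 1 + u / 2)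
    (by positivity) (s := 1 + u) (by simp; linarith) hO (fun n => by positivity)
  have hZ := (LSeriesHasSum_dk k hs).LSeries_eq
  simp only [Complex.ofReal_natCast] at hL
  rw [← hZ, hL, Complex.ofReal_mul, ← integral_complex_ofReal]
  congr 1
  · simp
  refine setIntegral_congr_fun measurableSet_Ioi fun t ht => ?_
  have ht0 : 0 < t := lt_trans one_pos ht
  have h1 : (t : ℂ) ^ (-((1 : ℂ) + u + 1)) = ((t ^ (-(1 + u + 1)) : ℝ) : ℂ) := by
    rw [Complex.ofReal_cpow ht0.le]; push_cast; rfl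
  have h2 : t ^ (-(1 + u + 1)) = t ^ (-(1 + u)) / t := by
    rw [neg_add (1 + u), Real.rpow_add ht0, Real.rpow_neg_one, div_eq_mul_inv]
  rw [h1, h2, dkSum]
  push_cast
  ring

theorem analyticAt_zetaPowAux (k : ℕ) : AnalyticAt ℂ (zetaPowAux k) 1 := by
  have h1 : zetaPowAux k = fun s =>
      (Function.update (fun s : ℂ => (s - 1) * riemannZeta s) 1 1 s) ^ k := by
    funext s
    by_cases hs : s = 1
    · simp [zetaPowAux, hs]
    · simp [zetaPowAux, hs]
  rw [h1]
  refine AnalyticAt.pow (analyticAt_of_differentiable_on_punctured_nhds_of_continuousAt ?_ ?_) k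
  · filter_upwards [self_mem_nhdsWithin] with s hs
    have hd : DifferentiableAt ℂ (fun s : ℂ => (s - 1) * riemannZeta s) s :=
      (differentiableAt_id.sub_const 1).mul (differentiableAt_riemannZeta hs)
    refine hd.congr_of_eventuallyEq ?_
    filter_upwards [isOpen_ne.mem_nhds hs] with z hz
    exact Function.update_of_ne hz _ _
  · simpa only [continuousAt_update_same] using riemannZeta_residue_one

theorem exists_zetaPowAux_taylor_bound (k : ℕ) :
    ∃ B : ℝ, ∀ᶠ u : ℝ in 𝓝[>] 0,
      |(zetaPowAux k (1 + u)).re - ∑ i ∈ range k, lam k i / Nat.factorial i * u ^ i| ≤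
        B * u ^ k := by
  have h := (analyticAt_zetaPowAux k).hasFPowerSeriesAt.isBigO_sub_partialSum_pow k
  obtain ⟨B, hB⟩ := h.bound
  have ht : Tendsto (fun u : ℝ => (u : ℂ)) (𝓝[>] 0) (𝓝 0) := by
    have := (Complex.continuous_ofReal.tendsto 0)
    rw [Complex.ofReal_zero] at this
    exact this.mono_left nhdsWithin_le_nhds
  refine ⟨B, ?_⟩
  filter_upwards [ht.eventually hB, self_mem_nhdsWithin] with u hu hu0
  have hu0 : 0 < u := hu0
  rw [norm_pow, norm_norm, Complex.norm_real, Real.norm_of_nonneg hu0.le] at hu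
  refine le_trans ?_ hu
  refine le_trans (le_of_eq ?_) (Complex.abs_re_le_norm _)
  rw [Complex.sub_re, FormalMultilinearSeries.partialSum, Complex.re_sum]
  congr 2
  refine Finset.sum_congr rfl fun i _ => ?_
  rw [FormalMultilinearSeries.ofScalars_apply_eq, smul_eq_mul, ← Complex.ofReal_pow,
    Complex.re_mul_ofReal, Complex.div_natCast_re, lam]

theorem one_add_mul_sum_alternating (c : ℕ → ℝ) (u : ℝ) (k : ℕ) :
    (1 + u) * ∑ m ∈ range (k + 1), ((-1) ^ m * ∑ i ∈ range (m + 1), (-1) ^ i * c i) * u ^ m =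
      ∑ i ∈ range (k + 1), c i * u ^ i +
        ((-1) ^ k * ∑ i ∈ range (k + 1), (-1) ^ i * c i) * u ^ (k + 1) := by
  induction k with
  | zero => simp; ring
  | succ k ih =>
    rw [Finset.sum_range_succ, mul_add, ih, Finset.sum_range_succ (fun i => c i * u ^ i) (k + 1),
      Finset.sum_range_succ (fun i => (-1) ^ i * c i) (k + 1)]
    have h : ((-1 : ℝ) ^ (k + 1)) * (-1) ^ (k + 1) = 1 := by
      rw [← mul_pow]; simp
    have h' : (-1 : ℝ) ^ (k + 1) = - (-1) ^ k := by rw [pow_succ]; ring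
    linear_combination (c (k + 1) * u ^ (k + 1)) * h +
      (u ^ (k + 1) * ∑ i ∈ range (k + 1), (-1) ^ i * c i) * h'

/-- The main-term polynomial of the Piltz divisor problem. -/
noncomputable def piltzPoly (k : ℕ) : Polynomial ℝ :=
  ∑ j ∈ range k, Polynomial.monomial j (aCoef k j / Nat.factorial j)

theorem one_add_mul_eval_laplacePoly_piltzPoly (k : ℕ) {u : ℝ} (hu : 0 < u) :
    u ^ (k + 1) * ((1 + u) * (laplacePoly (piltzPoly (k + 1))).eval u⁻¹) =
      ∑ i ∈ range (k + 1), lam (k + 1) i / Nat.factorial i * u ^ i +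
        aCoef (k + 1) 0 * u ^ (k + 1) := by
  have h := one_add_mul_sum_alternating (fun i => lam (k + 1) i / Nat.factorial i) u k
  rw [← Finset.sum_range_reflect] at h
  have ha : ∀ j, aCoef (k + 1) j = (-1) ^ (k - j) *
      ∑ i ∈ range (k - j + 1), (-1) ^ i * (lam (k + 1) i / Nat.factorial i) := by
    intro j
    simp only [aCoef, Nat.add_sub_cancel, mul_div_assoc]
  simp only [Nat.add_sub_cancel] at h
  rw [ha 0, Nat.sub_zero, ← h]
  simp only [← ha]
  simp only [piltzPoly, map_sum, laplacePoly_monomial, Polynomial.eval_finsetSum,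
    Polynomial.eval_monomial, Finset.mul_sum]
  refine Finset.sum_congr rfl fun j hj => ?_
  have hj' : j ≤ k := Nat.lt_succ_iff.1 (Finset.mem_range.1 hj)
  obtain ⟨m, rfl⟩ := Nat.exists_eq_add_of_le hj'
  rw [Nat.add_sub_cancel_left, inv_pow, mul_div_cancel₀ _ (by positivity)]
  have : u ^ (j + m + 1) = u ^ (j + 1) * u ^ m := by ring
  rw [this]
  field_simp

theorem hasLogPoly_dkSum (k : ℕ) :
    HasLogPoly (fun x => dkSum (k + 1) x / x) (piltzPoly (k + 1)) := by
  obtain ⟨Q, hQ⟩ := exists_hasLogPoly_dkSum (k + 1)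
  obtain ⟨B, hB⟩ := hQ.exists_integral_sub_laplacePoly_le
    ((monotone_dkSum (k + 1)).measurable.div measurable_id)
  obtain ⟨B', hB'⟩ := exists_zetaPowAux_taylor_bound (k + 1)
  have hbound : ∀ᶠ u : ℝ in 𝓝[>] 0,
      |(laplacePoly (Q - piltzPoly (k + 1))).eval u⁻¹| ≤ B + (B' + |aCoef (k + 1) 0|) := by
    filter_upwards [hB', self_mem_nhdsWithin] with u hu hu0
    have hu0 : 0 < u := hu0
    have hz : zetaPowAux (k + 1) (1 + u) = (((u ^ (k + 1) * ((1 + u) *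
        ∫ t in Set.Ioi (1 : ℝ), dkSum (k + 1) t / t * t ^ (-(1 + u))) : ℝ)) : ℂ) := by
      have hne : (1 + u : ℂ) ≠ 1 := by simpa using hu0.ne'
      rw [zetaPowAux, Function.update_of_ne hne, mul_pow, riemannZeta_pow_eq_integral _ hu0,
        add_sub_cancel_left, ← Complex.ofReal_pow, ← Complex.ofReal_mul]
    have hp := one_add_mul_eval_laplacePoly_piltzPoly k hu0
    have h1 := hB u hu0
    set I := ∫ t in Set.Ioi (1 : ℝ), dkSum (k + 1) t / t * t ^ (-(1 + u))
    rw [hz, Complex.ofReal_re] at hu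
    rw [← sub_eq_iff_eq_add] at hp
    rw [← hp] at hu
    have hpow : 0 < u ^ (k + 1) := by positivity
    have h2 : u ^ (k + 1) * ((1 + u) * I) -
        (u ^ (k + 1) * ((1 + u) * (laplacePoly (piltzPoly (k + 1))).eval u⁻¹) -
          aCoef (k + 1) 0 * u ^ (k + 1)) =
        ((1 + u) * (I - (laplacePoly (piltzPoly (k + 1))).eval u⁻¹) + aCoef (k + 1) 0) *
          u ^ (k + 1) := by ring
    rw [h2, abs_mul, abs_of_pos hpow] at hu
    have h3 := le_of_mul_le_mul_right hu hpow
    have h4 : |I - (laplacePoly (piltzPoly (k + 1))).eval u⁻¹| ≤ B' + |aCoef (k + 1) 0| := by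
      have h5 : (1 + u) * |I - (laplacePoly (piltzPoly (k + 1))).eval u⁻¹| ≤
          B' + |aCoef (k + 1) 0| := by
        rw [← abs_of_pos (show 0 < 1 + u by positivity), ← abs_mul]
        have := abs_sub_abs_le_abs_sub
          ((1 + u) * (I - (laplacePoly (piltzPoly (k + 1))).eval u⁻¹)) (-aCoef (k + 1) 0)
        rw [sub_neg_eq_add, abs_neg] at this
        linarith
      have := abs_nonneg (I - (laplacePoly (piltzPoly (k + 1))).eval u⁻¹)
      nlinarith
    rw [map_sub, Polynomial.eval_sub]
    rw [abs_sub_comm] at h1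
    exact (abs_sub_le _ I _).trans (add_le_add h1 h4)
  have hdeg : (laplacePoly (Q - piltzPoly (k + 1))).degree ≤ 0 := by
    rw [← Polynomial.isBoundedUnder_abs_atTop_iff]
    refine ⟨B + (B' + |aCoef (k + 1) 0|), eventually_map.2 ?_⟩
    filter_upwards [tendsto_inv_atTop_nhdsGT_zero.eventually hbound] with v hv
    rwa [inv_inv] at hv
  have hQP : Q = piltzPoly (k + 1) := by
    rw [← sub_eq_zero]
    ext j
    have h1 := coeff_laplacePoly (Q - piltzPoly (k + 1)) j
    rw [Polynomial.coeff_eq_zero_of_degree_lt (hdeg.trans_lt (by exact_mod_cast j.succ_pos))] at h1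
    rw [Polynomial.coeff_zero]
    exact (mul_eq_zero.1 h1.symm).resolve_left (by positivity)
  rwa [← hQP]

theorem measurable_Deltak (k : ℕ) : Measurable (Deltak k) := by
  refine (monotone_dkSum k).measurable.sub (measurable_id.mul ?_)
  exact Finset.measurable_sum _ fun j _ => (Real.measurable_log.pow_const j).const_mul _

theorem exists_Deltak_div_sq_bound {k : ℕ} (hk : 0 < k) :
    ∃ C δ : ℝ, 0 ≤ C ∧ 0 < δ ∧ ∀ r : ℝ, 1 ≤ r → |Deltak k r / r ^ 2| ≤ C * r ^ (-(1 + δ)) := by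
  obtain ⟨m, rfl⟩ := Nat.exists_eq_add_of_lt hk
  rw [zero_add]
  obtain ⟨C, δ, hC, hδ, h⟩ := hasLogPoly_dkSum m
  refine ⟨C, δ, hC, hδ, fun r hr => ?_⟩
  have hr0 : 0 < r := by linarith
  have h1 : Deltak (m + 1) r / r ^ 2 =
      (dkSum (m + 1) r / r - (piltzPoly (m + 1)).eval (Real.log r)) * r⁻¹ := by
    simp only [Deltak, dkSum, piltzPoly, Polynomial.eval_finsetSum, Polynomial.eval_monomial]
    field_simp
  rw [h1, abs_mul, abs_of_pos (inv_pos.2 hr0), show -(1 + δ) = -δ + -1 by ring,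
    Real.rpow_add hr0, Real.rpow_neg_one, ← mul_assoc]
  exact mul_le_mul_of_nonneg_right (h r hr) (by positivity)

theorem besselJ0_kernel_eq {x r : ℝ} (hx : 0 ≤ x) (hr : 1 ≤ r) (k : ℕ) :
    Deltak k r * besselJ0 (2 * Real.sqrt (x * Real.log r)) / r ^ 2 =
      Deltak k r / r ^ 2 * besselAux 0 (x * Real.log r) := by
  rw [besselJ0_two_mul_sqrt (mul_nonneg hx (Real.log_nonneg hr))]
  ring

theorem stmt14 (k : ℕ) (hk : 0 < k) :
    (∀ x : ℝ, 0 ≤ x →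
      IntegrableOn
        (fun r : ℝ => Deltak k r * besselJ0 (2 * Real.sqrt (x * Real.log r)) / r ^ 2)
        (Set.Ioi 1)) ∧
    ContinuousOn (phik k) (Set.Ici 0) ∧
    (∃ M : ℝ, ∀ x : ℝ, 0 ≤ x → |phik k x| ≤ M) ∧
    (phik k) =O[atTop] (fun x : ℝ => x ^ (-(1 / 4 : ℝ))) := by
  obtain ⟨C, δ, hC, hδ, hΔ⟩ := exists_Deltak_div_sq_bound hk
  obtain ⟨K, hK, hbessel⟩ := exists_besselAux_bound
  set f : ℝ → ℝ → ℝ := fun x r => Deltak k r / r ^ 2 * besselAux 0 (x * Real.log r) with hf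
  have hfm : ∀ x, Measurable (f x) := fun x =>
    ((measurable_Deltak k).div (measurable_id.pow_const 2)).mul
      ((continuous_besselAux 0).measurable.comp (Real.measurable_log.const_mul x))
  have hfeq : ∀ x, 0 ≤ x → ∀ r ∈ Set.Ioi (1 : ℝ), f x r =
      Deltak k r * besselJ0 (2 * Real.sqrt (x * Real.log r)) / r ^ 2 := fun x hx r hr =>
    (besselJ0_kernel_eq hx (le_of_lt hr) k).symm
  have hphi : ∀ x, 0 ≤ x → phik k x = ∫ r in Set.Ioi (1 : ℝ), f x r := fun x hx =>
    setIntegral_congr_fun measurableSet_Ioi fun r hr => (hfeq x hx r hr).symm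
  have hdom : ∀ x, 0 ≤ x → ∀ᵐ r ∂volume.restrict (Set.Ioi (1 : ℝ)),
      ‖f x r‖ ≤ C * r ^ (-(1 + δ)) := by
    refine fun x hx => (ae_restrict_iff' measurableSet_Ioi).2 (.of_forall fun r hr => ?_)
    have hr1 : 1 ≤ r := le_of_lt hr
    rw [hf, norm_mul, Real.norm_eq_abs, Real.norm_eq_abs]
    exact (mul_le_of_le_one_right (abs_nonneg _)
      (abs_besselAux_le_one (mul_nonneg hx (Real.log_nonneg hr1)))).trans (hΔ r hr1)
  have hI : IntegrableOn (fun r : ℝ => C * r ^ (-(1 + δ))) (Set.Ioi 1) :=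
    (integrableOn_Ioi_rpow_of_lt (by linarith) one_pos).const_mul C
  refine ⟨fun x hx => ?_, ?_, ⟨∫ r in Set.Ioi (1 : ℝ), C * r ^ (-(1 + δ)), fun x hx => ?_⟩, ?_⟩
  · exact IntegrableOn.congr_fun (Integrable.mono' hI (hfm x).aestronglyMeasurable (hdom x hx))
      (hfeq x hx) measurableSet_Ioi
  · refine ContinuousOn.congr ?_ fun x hx => hphi x hx
    refine continuousOn_of_dominated (fun x _ => (hfm x).aestronglyMeasurable)
      (fun x hx => hdom x hx) hI (.of_forall fun r => Continuous.continuousOn ?_)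
    exact continuous_const.mul ((continuous_besselAux 0).comp (continuous_mul_const _))
  · rw [hphi x hx, ← Real.norm_eq_abs]
    exact norm_integral_le_of_norm_le hI (hdom x hx)
  · have hJ := (integrableOn_log_rpow_mul_rpow (a := -(1 / 4)) (by norm_num) hδ).const_mul (C * K)
    refine IsBigO.of_bound
      (∫ r in Set.Ioi (1 : ℝ), C * K * (Real.log r ^ (-(1 / 4 : ℝ)) * r ^ (-(1 + δ)))) ?_
    filter_upwards [eventually_gt_atTop 0] with x hx
    rw [hphi x hx.le, Real.norm_of_nonneg (show 0 ≤ x ^ (-(1 / 4 : ℝ)) by positivity),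
      ← integral_mul_const]
    refine norm_integral_le_of_norm_le (hJ.mul_const _)
      ((ae_restrict_iff' measurableSet_Ioi).2 (.of_forall fun r hr => ?_))
    have hr1 : 1 ≤ r := le_of_lt hr
    have hlog : 0 < Real.log r := Real.log_pos hr
    rw [hf, norm_mul, Real.norm_eq_abs, Real.norm_eq_abs]
    have h1 := hbessel _ (mul_pos hx hlog)
    rw [Real.mul_rpow hx.le hlog.le] at h1
    calc _ ≤ C * r ^ (-(1 + δ)) * (K * (x ^ (-(1 / 4 : ℝ)) * Real.log r ^ (-(1 / 4 : ℝ)))) :=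
          mul_le_mul (hΔ r hr1) h1 (abs_nonneg _) (by positivity)
      _ = _ := by ring
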